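/- Let n > 1 and let α be a minimal zero sequence in Z/nZ of length greater than n/2 + 1. Then Index(α) = n. -/

import Mathlib

/-- A list in an additive commutative group is zero-free if no nonempty
sublist sums to zero. -/
def ZeroFree {G : Type*} [AddCommGroup G] (l : List G) : Prop :=
  ∀ t : List G, t.Sublist l → t ≠ [] → t.sum ≠ 0

/-- The least positive representative of a residue class mod n:
the unique integer in {1, ..., n} congruent to it. -/
def lpr (n : ℕ) (a : ZMod n) : ℕ := if a = 0 then n else a.val

/-!
Savchev and Chen's argument: a zero-free sequence `α` in an abelian group having fewer than `2|α|`
subset sums consists of positive multiples of a single element `x`, with coefficients `t` whose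
subset sums fill the whole interval `[0, ∑ t]`.

Adding a term to a zero-free sequence always creates a new subset sum, namely the total sum; call
the term a *1-term* if it creates no other one. Two facts drive the proof. A zero-free sequence has
at most one 1-term up to repetition. And if `β ≤ α` has at least `2|β|` subset sums, then extending
`β` inside `α` as long as this persists stops before `α`, and what remains are repetitions of one
1-term of `α`. Now let `x` be the 1-term of `α` and `T` a maximal part of `α` of the desired form.
If a term `y` were left, the multiples of `x` generated by `T` and their translates by `y` would be
disjoint, so `y` together with `T` would have enough subset sums to leave another copy of `x`
outside `T`; appending it to `T` contradicts maximality.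

In `ℤ/nℤ` remove one term from the minimal zero sequence. The rest is zero-free of length `> n/2`,
and zero-freeness forces `∑ t < ord x`, so that `ord x > n/2` and `x` is a generator. Multiplying by
the inverse of `x` turns the sequence into `t` together with `-∑ t`, whose representatives sum
to `n`.
-/

open scoped Finset Pointwise

section SubsetSums

variable {M : Type*} [AddCommMonoid M] [DecidableEq M] {s t : Multiset M} {a y : M}

/-- The sums of all submultisets of `s`, including the empty one: the multiset counterpart of
`Finset.subsetSum`. -/
def subsetSums (s : Multiset M) : Finset M := (s.powerset.map Multiset.sum).toFinset

lemma mem_subsetSums : y ∈ subsetSums s ↔ ∃ u ≤ s, u.sum = y := by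
  simp [subsetSums]

lemma zero_mem_subsetSums (s : Multiset M) : 0 ∈ subsetSums s :=
  mem_subsetSums.2 ⟨0, zero_le, Multiset.sum_zero⟩

lemma sum_mem_subsetSums (s : Multiset M) : s.sum ∈ subsetSums s :=
  mem_subsetSums.2 ⟨s, le_rfl, rfl⟩

lemma subsetSums_mono (h : s ≤ t) : subsetSums s ⊆ subsetSums t := by
  intro y hy
  obtain ⟨u, hu, rfl⟩ := mem_subsetSums.1 hy
  exact mem_subsetSums.2 ⟨u, hu.trans h, rfl⟩

lemma subsetSums_cons (a : M) (s : Multiset M) :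
    subsetSums (a ::ₘ s) = subsetSums s ∪ (a +ᵥ subsetSums s) := by
  ext y
  simp [Finset.mem_vadd_finset, subsetSums, Multiset.powerset_cons]

lemma two_le_card_subsetSums_singleton (ha : a ≠ 0) : 2 ≤ #(subsetSums {a}) := by
  refine Finset.one_lt_card.2 ⟨0, zero_mem_subsetSums _, a, ?_, ha.symm⟩
  simpa using sum_mem_subsetSums {a}

end SubsetSums

section ZeroSumFree

/-- The multiset version of `ZeroFree`: no nonempty submultiset sums to zero. -/
def ZeroSumFree {M : Type*} [AddCommMonoid M] (s : Multiset M) : Prop :=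
  ∀ u ≤ s, u ≠ 0 → u.sum ≠ 0

lemma ZeroSumFree.mono {M : Type*} [AddCommMonoid M] {s t : Multiset M} (ht : ZeroSumFree t)
    (hst : s ≤ t) : ZeroSumFree s :=
  fun u hu => ht u (hu.trans hst)

lemma ZeroSumFree.ne_zero_of_mem {M : Type*} [AddCommMonoid M] {s : Multiset M} {a : M}
    (hs : ZeroSumFree s) (ha : a ∈ s) : a ≠ 0 := by
  simpa using hs {a} (Multiset.singleton_le.2 ha) (Multiset.singleton_ne_zero a)

lemma ZeroFree.zeroSumFree_coe {G : Type*} [AddCommGroup G] {l : List G} (hl : ZeroFree l) :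
    ZeroSumFree (l : Multiset G) := by
  intro u hu hu0
  induction u using Quotient.inductionOn with
  | h u =>
    obtain ⟨v, hvu, hvl⟩ := Multiset.coe_le.1 hu
    have hv : v ≠ [] := by
      rintro rfl
      exact hu0 (by simpa using hvu)
    simpa [← hvu.sum_eq] using hl v hvl hv

lemma eq_of_sub_mem_of_sub_mem {G : Type*} [AddCommGroup G] {Z : Finset G} {x w y : G}
    (hx0 : x ≠ 0) (hx : ∀ z ∈ Z, z ≠ 0 → z - x ∈ Z) (hw : ∀ z ∈ Z, z ≠ 0 → z - w ∈ Z)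
    (hwZ : -w ∉ Z) (hy : y ∈ Z) (hy0 : y ≠ 0) (hxy : x + y ∉ Z) : x = w := by
  -- If `x ≠ w` then `x ∉ Z`, since otherwise `-w = (x - w) - x ∈ Z`. Hence subtracting `x`
  -- permutes the finite set `Z \ {0}`, which is therefore closed under adding `x` as well.
  classical
  by_contra hne
  have hxZ : x ∉ Z := fun hmem =>
    hwZ (by simpa using hx (x - w) (hw x hmem hx0) (sub_ne_zero.2 hne))
  have hmaps : Set.MapsTo (· - x) (Z.erase 0 : Set G) (Z.erase 0) := by
    intro z hz
    obtain ⟨hz0, hzZ⟩ := Finset.mem_erase.1 hz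
    refine Finset.mem_erase.2 ⟨sub_ne_zero.2 ?_, hx z hzZ hz0⟩
    rintro rfl
    exact hxZ hzZ
  obtain ⟨z, hz, hzy⟩ := Finset.surjOn_of_injOn_of_card_le _ hmaps sub_left_injective.injOn le_rfl
    (Finset.mem_erase.2 ⟨hy0, hy⟩)
  exact hxy (by simpa [← hzy] using Finset.mem_of_mem_erase hz)

variable {G : Type*} [AddCommGroup G] [DecidableEq G] {s t : Multiset G} {a x w y : G}

lemma ZeroSumFree.neg_notMem_subsetSums (h : ZeroSumFree (a ::ₘ s)) : -a ∉ subsetSums s := by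
  intro hmem
  obtain ⟨u, hu, hsum⟩ := mem_subsetSums.1 hmem
  exact h (a ::ₘ u) (Multiset.cons_le_cons a hu) Multiset.cons_ne_zero (by simp [hsum])

lemma ZeroSumFree.sum_cons_notMem_subsetSums (h : ZeroSumFree (a ::ₘ s)) :
    (a ::ₘ s).sum ∉ subsetSums s := by
  intro hmem
  obtain ⟨u, hu, hsum⟩ := mem_subsetSums.1 hmem
  obtain ⟨v, rfl⟩ := Multiset.le_iff_exists_add.1 hu
  refine h (a ::ₘ v) (Multiset.cons_le_cons a (Multiset.le_add_left v u))
    Multiset.cons_ne_zero ?_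
  rwa [← Multiset.add_cons, Multiset.sum_add, left_eq_add] at hsum

/-- `x` creates at most one new subset sum when added to `s`, that is, `x` is a *1-term* of
`x ::ₘ s` in the terminology of Savchev and Chen. -/
def AddsOneSum (x : G) (s : Multiset G) : Prop := #(subsetSums (x ::ₘ s) \ subsetSums s) ≤ 1

lemma AddsOneSum.cons (h : AddsOneSum x s) : AddsOneSum x (x ::ₘ s) := by
  have hsub : subsetSums (x ::ₘ x ::ₘ s) \ subsetSums (x ::ₘ s) ⊆
      x +ᵥ (subsetSums (x ::ₘ s) \ subsetSums s) := by
    rw [subsetSums_cons x (x ::ₘ s), Finset.union_sdiff_left, Finset.vadd_finset_sdiff]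
    refine Finset.sdiff_subset_sdiff subset_rfl ?_
    rw [subsetSums_cons x s]
    exact Finset.subset_union_right
  exact (Finset.card_le_card hsub).trans ((Finset.card_vadd_finset x _).trans_le h)

lemma AddsOneSum.replicate_add (h : AddsOneSum x s) (r : ℕ) :
    AddsOneSum x (Multiset.replicate r x + s) := by
  induction r with
  | zero => simpa using h
  | succ r ih => simpa only [Multiset.replicate_succ, Multiset.cons_add] using ih.cons

lemma AddsOneSum.subsetSums_eq_erase (hx : AddsOneSum x s) (h : ZeroSumFree (x ::ₘ s)) :
    subsetSums s = (subsetSums (x ::ₘ s)).erase (x ::ₘ s).sum := by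
  have hsum : (x ::ₘ s).sum ∈ subsetSums (x ::ₘ s) \ subsetSums s :=
    Finset.mem_sdiff.2 ⟨sum_mem_subsetSums _, h.sum_cons_notMem_subsetSums⟩
  have hnew : subsetSums (x ::ₘ s) \ subsetSums s = {(x ::ₘ s).sum} :=
    Finset.eq_singleton_iff_unique_mem.2
      ⟨hsum, fun y hy => Finset.card_le_one.1 hx y hy _ hsum⟩
  rw [Finset.erase_eq, ← hnew, Finset.sdiff_sdiff_eq_self
    (subsetSums_mono (Multiset.le_cons_self s x))]

lemma AddsOneSum.sub_mem_subsetSums (hx : AddsOneSum x s) (h : ZeroSumFree (x ::ₘ s))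
    (hy : y ∈ subsetSums s) (hy0 : y ≠ 0) : y - x ∈ subsetSums s := by
  have mem_vadd_iff (z : G) : z ∈ x +ᵥ subsetSums s ↔ z - x ∈ subsetSums s := by
    rw [← Finset.neg_vadd_mem_iff, vadd_eq_add, neg_add_eq_sub]
  -- By translation invariance this set is as large as `(x +ᵥ subsetSums s) \ subsetSums s`, which
  -- consists of the new sums.
  have hcard : #(subsetSums s \ (x +ᵥ subsetSums s)) ≤ 1 := by
    rwa [Finset.card_sdiff_comm (Finset.card_vadd_finset x _).symm, ← Finset.union_sdiff_left,
      ← subsetSums_cons]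
  have hzero : 0 ∈ subsetSums s \ (x +ᵥ subsetSums s) := by
    simpa [mem_vadd_iff, zero_mem_subsetSums] using h.neg_notMem_subsetSums
  by_contra hyx
  exact hy0 <| Finset.card_le_one.1 hcard y
    (Finset.mem_sdiff.2 ⟨hy, (mem_vadd_iff y).not.2 hyx⟩) 0 hzero

lemma AddsOneSum.eq_of_subsetSums_eq (hx : AddsOneSum x s) (hw : AddsOneSum w t)
    (hxs : ZeroSumFree (x ::ₘ s)) (hwt : ZeroSumFree (w ::ₘ t)) (hs : s ≠ 0)
    (hst : subsetSums s = subsetSums t) : x = w := by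
  refine eq_of_sub_mem_of_sub_mem (Z := subsetSums s) (y := s.sum)
    (hxs.ne_zero_of_mem (Multiset.mem_cons_self x s))
    (fun z hz hz0 => hx.sub_mem_subsetSums hxs hz hz0) ?_
    (hst ▸ hwt.neg_notMem_subsetSums) (sum_mem_subsetSums s)
    (hxs s (Multiset.le_cons_self s x) hs) ?_
  · rw [hst]
    exact fun z hz hz0 => hw.sub_mem_subsetSums hwt hz hz0
  · simpa only [Multiset.sum_cons] using hxs.sum_cons_notMem_subsetSums

lemma AddsOneSum.unique (hx : AddsOneSum x s) (hw : AddsOneSum w t)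
    (hxs : ZeroSumFree (x ::ₘ s)) (hst : x ::ₘ s = w ::ₘ t) : x = w := by
  obtain rfl | hs := eq_or_ne s 0
  · have hmem : w ∈ x ::ₘ 0 := hst ▸ Multiset.mem_cons_self w t
    exact (Multiset.mem_singleton.1 hmem).symm
  · have hwt : ZeroSumFree (w ::ₘ t) := hst ▸ hxs
    refine hx.eq_of_subsetSums_eq hw hxs hwt hs ?_
    rw [hx.subsetSums_eq_erase hxs, hw.subsetSums_eq_erase hwt, hst]

end ZeroSumFree

section Extension

variable {G : Type*} [AddCommGroup G] [DecidableEq G] {α β : Multiset G} {a : G}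

lemma exists_le_maximal_submultiset {M : Type*} {P : Multiset M → Prop} {α β : Multiset M}
    (hβα : β ≤ α) (hβ : P β) :
    ∃ γ, β ≤ γ ∧ Maximal (fun γ => γ ≤ α ∧ P γ) γ := by
  classical
  exact ((Set.finite_Iic α).subset fun _ h => h.1).exists_le_maximal ⟨hβα, hβ⟩

lemma addsOneSum_of_maximal
    (hβ : Maximal (fun γ => γ ≤ α ∧ 2 * γ.card ≤ #(subsetSums γ)) β) (ha : a ::ₘ β ≤ α) :
    AddsOneSum a β := by
  have hlt : #(subsetSums (a ::ₘ β)) < 2 * (a ::ₘ β).card := by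
    by_contra! hle
    exact Multiset.lt_cons_self β a |>.not_ge (hβ.2 ⟨ha, hle⟩ (Multiset.le_cons_self β a))
  have hle := hβ.prop.2
  rw [Multiset.card_cons] at hlt
  rw [AddsOneSum, Finset.card_sdiff_of_subset (subsetSums_mono (Multiset.le_cons_self β a))]
  omega

lemma ZeroSumFree.exists_addsOneSum (hα : ZeroSumFree α) (hcard : #(subsetSums α) < 2 * α.card)
    (hβα : β ≤ α) (hβ : 2 * β.card ≤ #(subsetSums β)) :
    ∃ x s, x ::ₘ s = α ∧ β ≤ s ∧ AddsOneSum x s := by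
  obtain ⟨γ, hβγ, hγ⟩ := exists_le_maximal_submultiset
    (P := fun γ => 2 * γ.card ≤ #(subsetSums γ)) hβα hβ
  obtain ⟨ρ, rfl⟩ := Multiset.le_iff_exists_add.1 hγ.prop.1
  have hρ : ρ ≠ 0 := by
    rintro rfl
    rw [add_zero] at hcard
    exact hcard.not_ge hγ.prop.2
  have cons_le {w : G} (hw : w ∈ ρ) : w ::ₘ γ ≤ γ + ρ := by
    rw [← Multiset.singleton_add, add_comm]
    exact add_le_add_right (Multiset.singleton_le.2 hw) γ
  obtain ⟨x, hx⟩ := Multiset.exists_mem_of_ne_zero hρ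
  have hγ0 : γ ≠ 0 := by
    rintro rfl
    have hle : {x} ≤ 0 + ρ := cons_le hx
    have htwo := two_le_card_subsetSums_singleton (hα.ne_zero_of_mem (Multiset.singleton_le.1 hle))
    simpa using hγ.2 ⟨hle, by simpa using htwo⟩ zero_le
  have hone {w : G} (hw : w ∈ ρ) : AddsOneSum w γ := addsOneSum_of_maximal hγ (cons_le hw)
  have hrepl : ρ = Multiset.replicate ρ.card x := Multiset.eq_replicate_card.2 fun w hw =>
    (hone hw).eq_of_subsetSums_eq (hone hx) (hα.mono (cons_le hw)) (hα.mono (cons_le hx)) hγ0 rfl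
  obtain ⟨r, hr⟩ := Nat.exists_eq_succ_of_ne_zero (Multiset.card_pos.2 hρ).ne'
  refine ⟨x, Multiset.replicate r x + γ, ?_, hβγ.trans (Multiset.le_add_left _ _),
    (hone hx).replicate_add r⟩
  rw [hrepl, hr, Multiset.replicate_succ, add_comm γ, Multiset.cons_add]

end Extension

section Behaving

/-- A multiset of positive integers is *behaving* (Savchev and Chen) if its subset sums are all
the integers from `0` to its total sum. -/
structure IsBehaving (t : Multiset ℕ) : Prop where
  pos : ∀ i ∈ t, 0 < i
  mem_subsetSums_of_le : ∀ j ≤ t.sum, j ∈ subsetSums t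

lemma IsBehaving.zero : IsBehaving 0 where
  pos := by simp
  mem_subsetSums_of_le j hj := by
    simpa [Nat.le_zero.1 hj] using zero_mem_subsetSums (0 : Multiset ℕ)

variable {t : Multiset ℕ}

lemma IsBehaving.cons (ht : IsBehaving t) {k : ℕ} (hk : 0 < k) (hkt : k ≤ t.sum + 1) :
    IsBehaving (k ::ₘ t) where
  pos := by simpa [hk] using ht.pos
  mem_subsetSums_of_le j hj := by
    rw [Multiset.sum_cons] at hj
    rw [subsetSums_cons, Finset.mem_union, Finset.mem_vadd_finset]
    by_cases hjt : j ≤ t.sum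
    · exact .inl (ht.mem_subsetSums_of_le j hjt)
    · exact .inr ⟨j - k, ht.mem_subsetSums_of_le _ (by omega), by simp only [vadd_eq_add]; omega⟩

lemma IsBehaving.card_le_sum (ht : IsBehaving t) : t.card ≤ t.sum := by
  simpa using Multiset.card_nsmul_le_sum (a := 1) ht.pos

variable {M : Type*} [AddCommMonoid M] {x : M}

lemma IsBehaving.nsmul_mem_subsetSums [DecidableEq M] (ht : IsBehaving t) (x : M) {j : ℕ}
    (hjt : j ≤ t.sum) : j • x ∈ subsetSums (t.map (· • x)) := by
  obtain ⟨u, hu, rfl⟩ := mem_subsetSums.1 (ht.mem_subsetSums_of_le j hjt)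
  exact mem_subsetSums.2 ⟨u.map (· • x), Multiset.map_le_map hu, Multiset.sum_smul.symm⟩

lemma IsBehaving.nsmul_ne_zero (ht : IsBehaving t) (hfree : ZeroSumFree (t.map (· • x)))
    {j : ℕ} (hj : 0 < j) (hjt : j ≤ t.sum) : j • x ≠ 0 := by
  obtain ⟨u, hu, rfl⟩ := mem_subsetSums.1 (ht.mem_subsetSums_of_le j hjt)
  have hu0 : u ≠ 0 := by
    rintro rfl
    simp at hj
  simpa only [← Multiset.sum_smul] using
    hfree (u.map (· • x)) (Multiset.map_le_map hu) (by simpa using hu0)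

lemma IsBehaving.sum_lt_addOrderOf (ht : IsBehaving t) (hfree : ZeroSumFree (t.map (· • x)))
    (hx : IsOfFinAddOrder x) : t.sum < addOrderOf x := by
  by_contra! hle
  exact ht.nsmul_ne_zero hfree hx.addOrderOf_pos hle (addOrderOf_nsmul_eq_zero x)

end Behaving

section BehavingGroup

variable {G : Type*} [AddCommGroup G] {t : Multiset ℕ} {x y : G}

lemma IsBehaving.injOn_nsmul (ht : IsBehaving t) (hfree : ZeroSumFree (t.map (· • x))) :
    Set.InjOn (· • x) (Finset.range (t.sum + 1) : Set ℕ) := by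
  have ne_of_lt {i j : ℕ} (hij : i < j) (hj : j ≤ t.sum) : i • x ≠ j • x := by
    intro heq
    refine ht.nsmul_ne_zero hfree (Nat.sub_pos_of_lt hij) ((Nat.sub_le j i).trans hj) ?_
    rw [sub_nsmul x hij.le, heq, add_neg_cancel]
  intro i hi j hj heq
  simp only [Finset.coe_range, Set.mem_Iio, Nat.lt_succ_iff] at hi hj
  rcases lt_trichotomy i j with hij | rfl | hji
  · exact (ne_of_lt hij hj heq).elim
  · rfl
  · exact (ne_of_lt hji hi heq.symm).elim

variable [DecidableEq G]

lemma IsBehaving.disjoint_image_nsmul_vadd (ht : IsBehaving t)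
    (hfree : ZeroSumFree (y ::ₘ t.map (· • x))) (hy : ∀ k, 0 < k → k ≤ t.sum → y ≠ k • x) :
    Disjoint ((Finset.range (t.sum + 1)).image (· • x))
      (y +ᵥ (Finset.range (t.sum + 1)).image (· • x)) := by
  simp only [Finset.disjoint_left, Finset.mem_vadd_finset, Finset.mem_image, Finset.mem_range,
    Nat.lt_succ_iff, vadd_eq_add]
  rintro _ ⟨j, hj, rfl⟩ ⟨_, ⟨i, hi, rfl⟩, heq⟩
  rcases lt_or_ge i j with hij | hji
  · refine hy (j - i) (by omega) (by omega) ?_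
    rw [sub_nsmul x hij.le, ← heq, add_neg_cancel_right]
  · refine hfree.neg_notMem_subsetSums ?_
    have hneg : (i - j) • x = -y := by
      rw [sub_nsmul x hji, ← heq]
      abel
    exact hneg ▸ ht.nsmul_mem_subsetSums x (by omega)

lemma IsBehaving.two_mul_card_cons_le_card_subsetSums (ht : IsBehaving t)
    (hfree : ZeroSumFree (y ::ₘ t.map (· • x))) (hy : ∀ k, 0 < k → k ≤ t.sum → y ≠ k • x) :
    2 * (y ::ₘ t.map (· • x)).card ≤ #(subsetSums (y ::ₘ t.map (· • x))) := by
  set A : Finset G := (Finset.range (t.sum + 1)).image (· • x) with hA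
  have hcardA : #A = t.sum + 1 := by
    rw [hA, Finset.card_image_of_injOn
      (ht.injOn_nsmul (hfree.mono (Multiset.le_cons_self _ y))), Finset.card_range]
  have hAsub : A ⊆ subsetSums (t.map (· • x)) := Finset.image_subset_iff.2 fun j hj =>
    ht.nsmul_mem_subsetSums x (Finset.mem_range_succ_iff.1 hj)
  calc 2 * (y ::ₘ t.map (· • x)).card
      = 2 * (t.card + 1) := by simp
    _ ≤ #A + #(y +ᵥ A) := by
        rw [Finset.card_vadd_finset, hcardA, ← two_mul]
        gcongr
        exact ht.card_le_sum
    _ = #(A ∪ (y +ᵥ A)) :=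
        (Finset.card_union_of_disjoint (ht.disjoint_image_nsmul_vadd hfree hy)).symm
    _ ≤ #(subsetSums (y ::ₘ t.map (· • x))) := by
        rw [subsetSums_cons]
        exact Finset.card_le_card
          (Finset.union_subset_union hAsub (Finset.vadd_finset_subset_vadd_finset hAsub))

end BehavingGroup

section Structure

variable {G : Type*} [AddCommGroup G] {α : Multiset G}

theorem ZeroSumFree.exists_isBehaving_map_nsmul [DecidableEq G] (hα : ZeroSumFree α)
    (hcard : #(subsetSums α) < 2 * α.card) :
    ∃ (x : G) (t : Multiset ℕ), IsBehaving t ∧ α = t.map (· • x) := by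
  obtain ⟨x, s, hxs, -, hx⟩ := hα.exists_addsOneSum hcard zero_le (Nat.zero_le _)
  obtain ⟨T, -, hT⟩ := exists_le_maximal_submultiset
    (P := fun T => ∃ t, IsBehaving t ∧ T = t.map (· • x)) zero_le ⟨0, .zero, rfl⟩
  obtain ⟨hTα, t, ht, rfl⟩ := hT.prop
  have not_extendable {y : G} (hy : y ::ₘ t.map (· • x) ≤ α) (k : ℕ) (hk : 0 < k)
      (hkt : k ≤ t.sum + 1) : y ≠ k • x := by
    rintro rfl
    exact (Multiset.lt_cons_self _ _).not_ge <|
      hT.2 ⟨hy, k ::ₘ t, ht.cons hk hkt, by simp⟩ (Multiset.le_cons_self _ _)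
  refine ⟨x, t, ht, (hTα.eq_or_lt.resolve_right fun hlt => ?_).symm⟩
  obtain ⟨y, hy⟩ := Multiset.lt_iff_cons_le.1 hlt
  have hmany := ht.two_mul_card_cons_le_card_subsetSums (hα.mono hy)
    fun k hk hkt => not_extendable hy k hk (hkt.trans (Nat.le_succ _))
  obtain ⟨z, s', hzs', hle, hz⟩ := hα.exists_addsOneSum hcard hy hmany
  have hzx : z = x := hz.unique hx (hzs' ▸ hα) (hzs'.trans hxs.symm)
  have hzα : z ::ₘ t.map (· • x) ≤ α :=
    hzs' ▸ Multiset.cons_le_cons z ((Multiset.le_cons_self _ y).trans hle)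
  exact not_extendable hzα 1 one_pos (Nat.le_add_left 1 _) (by rw [hzx, one_nsmul])

theorem ZeroSumFree.exists_eq_map_nsmul_generator [Finite G] (hα : ZeroSumFree α)
    (hcard : Nat.card G < 2 * α.card) :
    ∃ (x : G) (t : Multiset ℕ), addOrderOf x = Nat.card G ∧ (∀ i ∈ t, 0 < i) ∧
      t.sum < Nat.card G ∧ α = t.map (· • x) := by
  classical
  have := Fintype.ofFinite G
  have hsums : #(subsetSums α) ≤ Nat.card G := by
    simpa only [Nat.card_eq_fintype_card] using Finset.card_le_univ (subsetSums α)
  obtain ⟨x, t, ht, rfl⟩ := hα.exists_isBehaving_map_nsmul (hsums.trans_lt hcard)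
  have hlt : t.sum < addOrderOf x := ht.sum_lt_addOrderOf hα (isOfFinAddOrder_of_finite x)
  have horder : addOrderOf x = Nat.card G := by
    refine (Nat.eq_of_dvd_of_lt_two_mul Nat.card_pos.ne' (addOrderOf_dvd_natCard x) ?_).symm
    have hcard_le := ht.card_le_sum
    rw [Multiset.card_map] at hcard
    omega
  exact ⟨x, t, horder, ht.pos, horder ▸ hlt, rfl⟩

end Structure

section LeastPositiveRepresentative

variable {n : ℕ}

lemma lpr_natCast {k : ℕ} (hk : 0 < k) (hkn : k ≤ n) : lpr n (k : ZMod n) = k := by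
  obtain rfl | hlt := hkn.eq_or_lt
  · simp [lpr]
  · rw [lpr, if_neg, ZMod.val_cast_of_lt hlt]
    rw [ZMod.natCast_eq_zero_iff]
    exact Nat.not_dvd_of_pos_of_lt hk hlt

lemma lpr_neg_natCast {k : ℕ} (hkn : k < n) : lpr n (-(k : ZMod n)) = n - k := by
  rw [← lpr_natCast (Nat.sub_pos_of_lt hkn) (Nat.sub_le n k), Nat.cast_sub hkn.le,
    ZMod.natCast_self, zero_sub]

variable [NeZero n]

lemma natCast_lpr (a : ZMod n) : (lpr n a : ZMod n) = a := by
  unfold lpr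
  split_ifs with h <;> simp [h]

lemma lpr_pos (a : ZMod n) : 0 < lpr n a := by
  unfold lpr
  split_ifs with h
  · exact Nat.pos_of_neZero n
  · exact ZMod.val_pos.2 h

lemma le_sum_map_lpr {l : List (ZMod n)} (hl : l ≠ []) (hsum : l.sum = 0) :
    n ≤ (l.map (lpr n)).sum := by
  refine Nat.le_of_dvd ?_ ((ZMod.natCast_eq_zero_iff _ n).1 ?_)
  · obtain ⟨a, l, rfl⟩ := List.exists_cons_of_ne_nil hl
    simpa using Or.inl (lpr_pos a)
  · simpa [Nat.cast_list_sum, Function.comp_def, natCast_lpr] using hsum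

lemma exists_intCast_mul_eq_one {x : ZMod n} (hx : addOrderOf x = Nat.card (ZMod n)) :
    ∃ g : ℤ, IsCoprime g n ∧ (g : ZMod n) * x = 1 := by
  obtain ⟨g, hg⟩ : (1 : ZMod n) ∈ AddSubgroup.zmultiples x := by
    simp [(AddSubgroup.card_eq_iff_eq_top _).1 ((Nat.card_zmultiples x).trans hx)]
  have hgx : (g : ZMod n) * x = 1 := by simpa only [zsmul_eq_mul] using hg
  exact ⟨g, ((ZMod.coe_int_isUnit_iff_isCoprime g n).1 (.of_mul_eq_one _ hgx)).symm, hgx⟩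

lemma ZeroFree.exists_sum_map_lpr_cons_eq {a : ZMod n} {l : List (ZMod n)} (hl : ZeroFree l)
    (hlen : n < 2 * l.length) (hsum : (a :: l).sum = 0) :
    ∃ g : ℤ, IsCoprime g n ∧ ((a :: l).map (fun b => lpr n (g * b))).sum = n := by
  obtain ⟨x, t, hx, hpos, hlt, hl_eq⟩ := hl.zeroSumFree_coe.exists_eq_map_nsmul_generator
    (by simpa using hlen)
  rw [Nat.card_zmod] at hlt
  obtain ⟨g, hg, hgx⟩ := exists_intCast_mul_eq_one hx
  have mul_nsmul_eq (i : ℕ) : (g : ZMod n) * (i • x) = i := by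
    rw [mul_smul_comm, hgx, nsmul_one]
  have hga : (g : ZMod n) * a = -(t.sum : ZMod n) := by
    have hlsum : l.sum = t.sum • x := by
      rw [Multiset.sum_smul, ← hl_eq, Multiset.sum_coe]
    rw [List.sum_cons] at hsum
    rw [eq_neg_of_add_eq_zero_left hsum, hlsum, mul_neg, mul_nsmul_eq]
  have htail : (l.map (fun b => lpr n (g * b))).sum = t.sum := by
    rw [← Multiset.sum_coe, ← Multiset.map_coe, hl_eq, Multiset.map_map]
    refine congrArg Multiset.sum ((Multiset.map_congr rfl fun i hi => ?_).trans t.map_id)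
    rw [Function.comp_apply, mul_nsmul_eq, id,
      lpr_natCast (hpos i hi) ((Multiset.le_sum_of_mem hi).trans hlt.le)]
  refine ⟨g, hg, ?_⟩
  rw [List.map_cons, List.sum_cons, htail, hga, lpr_neg_natCast hlt, Nat.sub_add_cancel hlt.le]

end LeastPositiveRepresentative

theorem stmt12 (n : ℕ) (hn : 1 < n) (α : List (ZMod n))
    (hlen : n + 2 < 2 * α.length)
    (hsum : α.sum = 0)
    (hmin : ∀ t : List (ZMod n), t.Sublist α → t ≠ [] → t ≠ α → t.sum ≠ 0) :
    sInf {m : ℕ | ∃ g : ℤ, IsCoprime g (n : ℤ) ∧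
      (α.map (fun a => lpr n ((g : ZMod n) * a))).sum = m} = n := by
  have : NeZero n := ⟨by omega⟩
  have hα : α ≠ [] := by
    rintro rfl
    simp at hlen
  refine IsLeast.csInf_eq ⟨?_, ?_⟩
  · obtain ⟨a, l, rfl⟩ := List.exists_cons_of_ne_nil hα
    have hl : ZeroFree l := fun t ht ht0 =>
      hmin t (ht.cons a) ht0 fun h => (h ▸ ht).length_le.not_gt (Nat.lt_succ_self _)
    refine hl.exists_sum_map_lpr_cons_eq ?_ hsum
    rw [List.length_cons] at hlen
    omega
  · rintro m ⟨g, -, rfl⟩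
    have hgsum : (α.map ((g : ZMod n) * ·)).sum = 0 := by
      rw [List.sum_map_mul_left, List.map_id', hsum, mul_zero]
    simpa [Function.comp_def] using le_sum_map_lpr (by simpa using hα) hgsum
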